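/- Let γ > 0, α ∈ (0, 1/γ) and r = 4(1 - sqrt(γα))²/(1 - γα). Then r ∈ (0,4), and the limit of a_k for the recursion t_k = (1 + sqrt(1 + r·t_{k-1}²))/2 with a_k = (t_{k-1}-1)/t_k equals... specifically, with r ∈ (0,4), lim a_k = r/4 = (1 - sqrt(γα))²/(1 - γα) = a★. -/

import Mathlib

/-!
The recursion iterates `x ↦ (p + √(q + r x²)) / 2`. Since `√(q + x²)` is the norm of `√q + x i`,
it is `1`-Lipschitz in `x`, so for `r < 4` the map contracts with constant `√r / 2 < 1` and `t`
tends to its fixed point `T` from every starting value. Then `a → 1 - 1 / T`, which is `r / 4` when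
`p = q = 1`. With `s = √(γ α)` the adaptive choice reads `r = 4 (1 - s) / (1 + s)`, which lies in
`(0, 4)`.
-/

open Set Filter Topology

lemma abs_sqrt_add_sq_sub_sqrt_add_sq_le {q : ℝ} (hq : 0 ≤ q) (x y : ℝ) :
    |√(q + x ^ 2) - √(q + y ^ 2)| ≤ |x - y| := by
  have norm_eq (z : ℝ) : √(q + z ^ 2) = ‖(√q : ℂ) + z * Complex.I‖ := by
    rw [Complex.norm_add_mul_I, Real.sq_sqrt hq]
  calc |√(q + x ^ 2) - √(q + y ^ 2)|
      ≤ ‖((√q : ℂ) + x * Complex.I) - (√q + y * Complex.I)‖ := by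
        rw [norm_eq, norm_eq]
        exact abs_norm_sub_norm_le _ _
    _ = ‖((x - y : ℝ) : ℂ) * Complex.I‖ := by push_cast; ring_nf
    _ = |x - y| := by rw [norm_mul, Complex.norm_I, mul_one, Complex.norm_real, Real.norm_eq_abs]

/-- The map whose iteration `t (k + 1) = fistaStep p q r (t k)` generates the parameters of the
modified FISTA scheme; the original FISTA is `p = q = 1`, `r = 4`. -/
noncomputable def fistaStep (p q r x : ℝ) : ℝ := (p + √(q + r * x ^ 2)) / 2

/-- The limit of the iteration of `fistaStep p q r` for `0 ≤ p, q` and `0 ≤ r < 4`: the larger root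
of `(4 - r) T² - 4 p T + p² - q = 0`. The square root is the `Δ` of the paper. -/
noncomputable def fistaFixedPoint (p q r : ℝ) : ℝ :=
  (2 * p + √(r * p ^ 2 + (4 - r) * q)) / (4 - r)

section FistaStep

variable {p q r : ℝ}

lemma abs_fistaStep_sub_fistaStep_le (hq : 0 ≤ q) (hr : 0 ≤ r) (x y : ℝ) :
    |fistaStep p q r x - fistaStep p q r y| ≤ √r / 2 * |x - y| := by
  have scale (z : ℝ) : r * z ^ 2 = (√r * z) ^ 2 := by rw [mul_pow, Real.sq_sqrt hr]
  calc |fistaStep p q r x - fistaStep p q r y|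
      = |√(q + (√r * x) ^ 2) - √(q + (√r * y) ^ 2)| / 2 := by
        rw [fistaStep, fistaStep, scale, scale, ← sub_div, add_sub_add_left_eq_sub, abs_div,
          abs_two]
    _ ≤ |√r * x - √r * y| / 2 :=
        div_le_div_of_nonneg_right (abs_sqrt_add_sq_sub_sqrt_add_sq_le hq _ _) zero_le_two
    _ = √r / 2 * |x - y| := by
        rw [← mul_sub, abs_mul, abs_of_nonneg (Real.sqrt_nonneg r)]
        ring

lemma contractingWith_fistaStep (hq : 0 ≤ q) (hr : r ∈ Ico 0 4) :
    ContractingWith (√r / 2).toNNReal (fistaStep p q r) := by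
  refine ⟨?_, LipschitzWith.of_dist_le_mul fun x y => ?_⟩
  · have : √r < 2 := (Real.sqrt_lt' two_pos).2 (by linarith [hr.2])
    exact Real.toNNReal_lt_one.2 (by linarith)
  · rw [Real.coe_toNNReal _ (by positivity)]
    exact abs_fistaStep_sub_fistaStep_le hq hr.1 x y

lemma isFixedPt_fistaFixedPoint (hp : 0 ≤ p) (hq : 0 ≤ q) (hr : r ∈ Ico 0 4) :
    Function.IsFixedPt (fistaStep p q r) (fistaFixedPoint p q r) := by
  obtain ⟨hr0, hr4⟩ := hr
  have h4r : 0 < 4 - r := sub_pos.2 hr4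
  set Δ := √(r * p ^ 2 + (4 - r) * q)
  have hΔ : Δ ^ 2 = r * p ^ 2 + (4 - r) * q := Real.sq_sqrt (by positivity)
  set T := fistaFixedPoint p q r
  have hT : (4 - r) * T = 2 * p + Δ := mul_div_cancel₀ _ h4r.ne'
  have sq_eq : q + r * T ^ 2 = (2 * T - p) ^ 2 := by
    refine mul_left_cancel₀ h4r.ne' ?_
    linear_combination -hΔ - ((4 - r) * T - 2 * p + Δ) * hT
  have nonneg : 0 ≤ 2 * T - p := by
    have : 2 * T - p = (2 * Δ + r * p) / (4 - r) :=
      eq_div_of_mul_eq h4r.ne' (by linear_combination 2 * hT)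
    rw [this]
    positivity
  rw [Function.IsFixedPt, fistaStep, sq_eq, Real.sqrt_sq nonneg]
  ring

lemma tendsto_fistaFixedPoint (hp : 0 ≤ p) (hq : 0 ≤ q) (hr : r ∈ Ico 0 4) {t : ℕ → ℝ}
    (ht : ∀ k, t (k + 1) = fistaStep p q r (t k)) :
    Tendsto t atTop (𝓝 (fistaFixedPoint p q r)) := by
  have hf := contractingWith_fistaStep (p := p) hq hr
  have iterate_eq : (fun k => (fistaStep p q r)^[k] (t 0)) = t := by
    funext k
    induction k with
    | zero => rfl
    | succ k ih => rw [Function.iterate_succ_apply', ih, ht]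
  rw [hf.fixedPoint_unique (isFixedPt_fistaFixedPoint hp hq hr), ← iterate_eq]
  exact hf.tendsto_iterate_fixedPoint (t 0)

lemma tendsto_inertia (hp : 0 < p) (hq : 0 ≤ q) (hr : r ∈ Ico 0 4) {t a : ℕ → ℝ}
    (ht : ∀ k, t (k + 1) = fistaStep p q r (t k)) (ha : ∀ k, a (k + 1) = (t k - 1) / t (k + 1)) :
    Tendsto a atTop (𝓝 (1 - (4 - r) / (2 * p + √(r * p ^ 2 + (4 - r) * q)))) := by
  have hT : fistaFixedPoint p q r ≠ 0 :=
    (div_pos (by positivity) (sub_pos.2 hr.2)).ne'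
  have ht_lim := tendsto_fistaFixedPoint hp.le hq hr ht
  have ha_lim := (ht_lim.sub_const 1).div ((tendsto_add_atTop_iff_nat 1).2 ht_lim) hT
  rw [sub_div, div_self hT, fistaFixedPoint, one_div_div] at ha_lim
  exact (tendsto_add_atTop_iff_nat 1).1 (ha_lim.congr fun k => (ha k).symm)

lemma tendsto_inertia_one_one (hr : r ∈ Ico 0 4) {t a : ℕ → ℝ}
    (ht : ∀ k, t (k + 1) = fistaStep 1 1 r (t k)) (ha : ∀ k, a (k + 1) = (t k - 1) / t (k + 1)) :
    Tendsto a atTop (𝓝 (r / 4)) := by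
  have hΔ : √(r * 1 ^ 2 + (4 - r) * 1) = 2 := by
    rw [Real.sqrt_eq_iff_eq_sq (by linarith) zero_le_two]
    ring
  convert tendsto_inertia one_pos zero_le_one hr ht ha using 2
  rw [hΔ]
  ring

end FistaStep

lemma one_sub_sqrt_sq_div_one_sub {c : ℝ} (hc0 : 0 ≤ c) (hc1 : c ≠ 1) :
    (1 - √c) ^ 2 / (1 - c) = (1 - √c) / (1 + √c) := by
  have hpos : 0 < 1 + √c := by positivity
  rw [div_eq_div_iff (sub_ne_zero.2 hc1.symm) hpos.ne']
  linear_combination -(1 - √c) * Real.sq_sqrt hc0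

lemma one_sub_sqrt_sq_div_one_sub_mem_Ioo {c : ℝ} (hc : c ∈ Ioo 0 1) :
    (1 - √c) ^ 2 / (1 - c) ∈ Ioo 0 1 := by
  have hs0 : 0 < √c := Real.sqrt_pos.2 hc.1
  have hs1 : √c < 1 := (Real.sqrt_lt' one_pos).2 (by simpa only [one_pow] using hc.2)
  rw [one_sub_sqrt_sq_div_one_sub hc.1.le hc.2.ne]
  exact ⟨div_pos (by linarith) (by linarith), (div_lt_one (by linarith)).2 (by linarith)⟩

theorem adaptive_fista_limit_general (c : ℝ) (hc : c ∈ Ioo 0 1)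
    (r : ℝ) (hr : r = 4 * (1 - √c) ^ 2 / (1 - c)) (t a : ℕ → ℝ)
    (hrec : ∀ k, t (k + 1) = (1 + √(1 + r * (t k) ^ 2)) / 2)
    (ha : ∀ k, a (k + 1) = (t k - 1) / t (k + 1)) :
    0 < r ∧ r < 4 ∧ Tendsto a atTop (𝓝 (r / 4)) ∧ r / 4 = (1 - √c) ^ 2 / (1 - c) := by
  have hr_div : r / 4 = (1 - √c) ^ 2 / (1 - c) := by rw [hr]; ring
  obtain ⟨hpos, hlt⟩ := one_sub_sqrt_sq_div_one_sub_mem_Ioo hc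
  rw [← hr_div] at hpos hlt
  have hr0 : 0 < r := by linarith
  have hr4 : r < 4 := by linarith
  exact ⟨hr0, hr4, tendsto_inertia_one_one ⟨hr0.le, hr4⟩ hrec ha, hr_div⟩

theorem adaptive_fista_limit (γ α : ℝ) (hγ : 0 < γ) (hα : α ∈ Set.Ioo 0 (1 / γ))
    (r : ℝ) (hr : r = 4 * (1 - Real.sqrt (γ * α)) ^ 2 / (1 - γ * α))
    (t a : ℕ → ℝ) (ht0 : t 0 = 1)
    (hrec : ∀ k, t (k + 1) = (1 + Real.sqrt (1 + r * (t k) ^ 2)) / 2)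
    (ha : ∀ k, a (k + 1) = (t k - 1) / t (k + 1)) :
    0 < r ∧ r < 4 ∧ Filter.Tendsto a Filter.atTop (nhds (r / 4)) ∧
      r / 4 = (1 - Real.sqrt (γ * α)) ^ 2 / (1 - γ * α) := by
  have hγα : γ * α ∈ Ioo 0 1 := ⟨mul_pos hγ hα.1, (lt_div_iff₀' hγ).1 hα.2⟩
  exact adaptive_fista_limit_general (γ * α) hγα r hr t a hrec ha
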